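/- The normalized polynomials Q_w = S_w P_w are orthonormal: for all natural numbers i, j, ∫_{-1}^{1} Q_i(x) W_{p,n}(x) Q_j(x)^T dx = δ_{ij} · I, where I is the 2×2 identity matrix. -/

import Mathlib

open Matrix

/-- Pochhammer symbol `(a)_k = a (a+1) ⋯ (a+k-1)`. -/
noncomputable def poch (a : ℝ) (k : ℕ) : ℝ := ∏ i ∈ Finset.range k, (a + i)

/-- Gegenbauer polynomial `C_w^λ(x)`, with the convention `C_w^λ = 0` for `w < 0`. -/
noncomputable def geg (l : ℝ) (w : ℤ) (x : ℝ) : ℝ :=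
  if w < 0 then 0 else
    poch (2 * l) w.toNat / (w.toNat.factorial : ℝ) *
      ∑ k ∈ Finset.range (w.toNat + 1),
        (poch (-(w.toNat : ℝ)) k * poch ((w.toNat : ℝ) + 2 * l) k) /
            (poch (l + 1 / 2) k * (k.factorial : ℝ)) * ((1 - x) / 2) ^ k

/-- The weight matrix `W_{p,n}(x)`. -/
noncomputable def Wmat (n : ℕ) (p : ℝ) (x : ℝ) : Matrix (Fin 2) (Fin 2) ℝ :=
  (1 - x ^ 2) ^ ((n : ℝ) / 2 - 1) •
    !![p * x ^ 2 + (n : ℝ) - p, -(n : ℝ) * x; -(n : ℝ) * x, ((n : ℝ) - p) * x ^ 2 + p]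

/-- The matrix valued polynomial `P_w`. -/
noncomputable def Pmat (n : ℕ) (p : ℝ) (w : ℕ) (x : ℝ) : Matrix (Fin 2) (Fin 2) ℝ :=
  !![1 / ((n : ℝ) + 1) * geg (((n : ℝ) + 1) / 2) (w : ℤ) x +
        1 / (p + w) * geg (((n : ℝ) + 3) / 2) ((w : ℤ) - 2) x,
      1 / (p + w) * geg (((n : ℝ) + 3) / 2) ((w : ℤ) - 1) x;
      1 / ((n : ℝ) - p + w) * geg (((n : ℝ) + 3) / 2) ((w : ℤ) - 1) x,
      1 / ((n : ℝ) + 1) * geg (((n : ℝ) + 1) / 2) (w : ℤ) x +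
        1 / ((n : ℝ) - p + w) * geg (((n : ℝ) + 3) / 2) ((w : ℤ) - 2) x]

/-- The normalizing matrix `S_w`: the (diagonal, positive definite) inverse square root
of `‖P_w‖² = ∫_{-1}^1 P_w W_{p,n} P_w^T dx`, given explicitly. -/
noncomputable def Smat (n : ℕ) (p : ℝ) (w : ℕ) : Matrix (Fin 2) (Fin 2) ℝ :=
  Real.sqrt (((w.factorial : ℝ) * ((n : ℝ) + 1) * ((n : ℝ) + 2 * w + 1) *
        Real.Gamma ((n : ℝ) / 2 + 3 / 2)) /
      (Real.sqrt Real.pi * 2 ^ (w / 2) * Real.Gamma ((n : ℝ) / 2 + 1 + (w / 2 : ℕ)) *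
        ∏ k ∈ Finset.range ((w + 1) / 2), ((n : ℝ) + 2 * k + 1))) •
    Matrix.diagonal ![Real.sqrt ((p + w) / (p * ((n : ℝ) - p + w + 1))),
      Real.sqrt (((n : ℝ) - p + w) / (((n : ℝ) - p) * (p + w + 1)))]

/-- The orthonormal matrix valued polynomials `Q_w = S_w P_w`. -/
noncomputable def Qmat (n : ℕ) (p : ℝ) (w : ℕ) (x : ℝ) : Matrix (Fin 2) (Fin 2) ℝ :=
  Smat n p w * Pmat n p w x

/-
The functions `x ↦ (1 - x²) ^ (l + 1/2) r(x)` vanish at `±1`, so the operator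
`D_l r = (1 - x²) r' - (2l + 1) x r` has integral zero against `(1 - x²) ^ (l - 1/2)`. The
Gegenbauer polynomials satisfy `D_l (C_w^l)' = -w (w + 2l) C_w^l`, which gives both their
orthogonality and, through `(C_w^l)' = 2l C_{w-1}^{l+1}`, their norms by induction on `w`.

Put `q = n - p`, `2l + 1 = n`, and write `R(f)` for the matrix with rows `(p f + x f', f')` and
`(f', q f + x f')`, so that `P_w` is `R(C_w^{l+1})` with rescaled rows. With `M` the polynomial part
of the weight matrix, the off-diagonal entries of `R(f) M R(g)ᵀ` lie in the image of `D_l`, and when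
`g = C_w^{l+1}` the diagonal ones are, modulo that image, `p (p + w) (q + w + 1) (1 - x²) f g` and
`q (q + w) (p + w + 1) (1 - x²) f g`. The claim is thereby reduced to the scalar case.
-/

section Pochhammer

lemma poch_succ (a : ℝ) (k : ℕ) : poch a (k + 1) = poch a k * (a + k) :=
  Finset.prod_range_succ _ _

lemma poch_add (a : ℝ) (m k : ℕ) : poch a (m + k) = poch a m * poch (a + m) k := by
  simp only [poch, Finset.prod_range_add, Nat.cast_add, add_assoc]

lemma poch_succ' (a : ℝ) (k : ℕ) : poch a (k + 1) = a * poch (a + 1) k := by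
  rw [add_comm, poch_add]
  simp [poch]

lemma poch_pos {a : ℝ} (ha : 0 < a) (k : ℕ) : 0 < poch a k :=
  Finset.prod_pos fun _ _ ↦ by positivity

lemma poch_neg_natCast_eq_zero {w k : ℕ} (h : w < k) : poch (-(w : ℝ)) k = 0 :=
  Finset.prod_eq_zero (Finset.mem_range.2 h) (neg_add_cancel _)

end Pochhammer

section Coefficients

/-- The coefficient of `((1 - x) / 2) ^ k` in the Gegenbauer polynomial `C_w^l(x)`; the products
`(2l)_w (w + 2l)_k` of the hypergeometric form are merged into `(2l)_{w+k}`. -/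
noncomputable def gegenbauerCoeff (l : ℝ) (w k : ℕ) : ℝ :=
  poch (-w) k * poch (2 * l) (w + k) / (w.factorial * k.factorial * poch (l + 1 / 2) k)

variable {l : ℝ}

lemma gegenbauerCoeff_eq_zero (l : ℝ) {w k : ℕ} (h : w < k) : gegenbauerCoeff l w k = 0 := by
  simp [gegenbauerCoeff, poch_neg_natCast_eq_zero h]

lemma gegenbauerCoeff_succ_right (hl : -1 / 2 < l) (w k : ℕ) :
    gegenbauerCoeff l w (k + 1) * ((k + 1) * (k + l + 1 / 2)) =
      gegenbauerCoeff l w k * ((k - w) * (w + k + 2 * l)) := by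
  have hl' : 0 < l + 1 / 2 := by linarith
  have hpoch := (poch_pos hl' k).ne'
  have hfactor : l + 1 / 2 + k ≠ 0 := by positivity
  rw [show (k : ℝ) + l + 1 / 2 = l + 1 / 2 + k by ring]
  simp only [gegenbauerCoeff, ← add_assoc, poch_succ, Nat.factorial_succ, Nat.cast_mul,
    Nat.cast_add, Nat.cast_one]
  generalize l + 1 / 2 + (k : ℝ) = c at *
  generalize poch (l + 1 / 2) k = d at *
  field_simp
  ring

lemma gegenbauerCoeff_succ_left (l : ℝ) (w k : ℕ) :
    gegenbauerCoeff l (w + 1) k * (w + 1 - k) = gegenbauerCoeff l w k * (w + k + 2 * l) := by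
  have hneg : poch (-((w + 1 : ℕ) : ℝ)) k * (w + 1 - k) = (w + 1) * poch (-(w : ℝ)) k := by
    have h := (poch_succ (-((w + 1 : ℕ) : ℝ)) k).symm.trans (poch_succ' _ k)
    rw [show -((w + 1 : ℕ) : ℝ) + 1 = -w by push_cast; ring] at h
    push_cast at h ⊢
    linear_combination -h
  have hpos : poch (2 * l) (w + 1 + k) = poch (2 * l) (w + k) * (2 * l + w + k) := by
    rw [add_right_comm, poch_succ, Nat.cast_add, add_assoc]
  simp only [gegenbauerCoeff, hpos, Nat.factorial_succ, Nat.cast_mul, Nat.cast_succ] at hneg ⊢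
  rw [div_mul_eq_mul_div, div_mul_eq_mul_div, mul_right_comm, hneg]
  field_simp
  ring

lemma succ_mul_gegenbauerCoeff_succ_succ (hl : -1 / 2 < l) (w k : ℕ) :
    (k + 1) * gegenbauerCoeff l (w + 1) (k + 1) = -4 * l * gegenbauerCoeff (l + 1) w k := by
  have hl' : 0 < l + 1 / 2 := by linarith
  have hneg : poch (-((w + 1 : ℕ) : ℝ)) (k + 1) = -(w + 1) * poch (-(w : ℝ)) k := by
    rw [poch_succ', show -((w + 1 : ℕ) : ℝ) + 1 = -w by push_cast; ring]
    push_cast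
    ring
  have hpos : poch (2 * l) (w + 1 + (k + 1)) =
      2 * l * (2 * (l + 1 / 2)) * poch (2 * (l + 1)) (w + k) := by
    rw [show w + 1 + (k + 1) = w + k + 1 + 1 by ring, poch_succ', poch_succ',
      show 2 * l + 1 + 1 = 2 * (l + 1) by ring]
    ring
  rw [gegenbauerCoeff, gegenbauerCoeff, hneg, hpos, poch_succ' (l + 1 / 2), add_right_comm l 1,
    Nat.factorial_succ, Nat.factorial_succ]
  push_cast
  generalize l + 1 / 2 = c at *
  field_simp
  ring

end Coefficients

section GegenbauerPolynomial

open Polynomial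

/-- The Gegenbauer polynomial `C_w^l` in the variable `y = (1 - x) / 2`. -/
noncomputable def shiftedGegenbauer (l : ℝ) (w : ℕ) : ℝ[X] :=
  ∑ k ∈ Finset.range (w + 1), C (gegenbauerCoeff l w k) * X ^ k

/-- The Gegenbauer polynomial `C_w^l` as an element of `ℝ[X]`. -/
noncomputable def gegenbauer (l : ℝ) (w : ℕ) : ℝ[X] :=
  (shiftedGegenbauer l w).comp (C (1 / 2) * (1 - X))

/-- The operator `r ↦ (1 - X²) r' - (2l + 1) X r`, that is, `r ↦ ω⁻¹ ((1 - x²) ω r)'` for the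
Gegenbauer weight `ω = (1 - x²) ^ (l - 1/2)`. -/
noncomputable def gegenbauerDiv (l : ℝ) (r : ℝ[X]) : ℝ[X] :=
  (1 - X ^ 2) * derivative r - C (2 * l + 1) * (X * r)

variable {l : ℝ}

lemma coeff_X_mul_derivative (r : ℝ[X]) (k : ℕ) : (X * derivative r).coeff k = k * r.coeff k := by
  cases k with
  | zero => simp
  | succ k => rw [coeff_X_mul, coeff_derivative, Nat.cast_succ, mul_comm]

lemma coeff_shiftedGegenbauer (l : ℝ) (w k : ℕ) :
    (shiftedGegenbauer l w).coeff k = gegenbauerCoeff l w k := by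
  simp only [shiftedGegenbauer, finsetSum_coeff, coeff_C_mul, coeff_X_pow, mul_ite, mul_one,
    mul_zero, Finset.sum_ite_eq, Finset.mem_range]
  exact ite_eq_left_iff.2 fun h ↦ (gegenbauerCoeff_eq_zero l (by lia)).symm

lemma derivative_shiftedGegenbauer_succ (hl : -1 / 2 < l) (w : ℕ) :
    derivative (shiftedGegenbauer l (w + 1)) = C (-4 * l) * shiftedGegenbauer (l + 1) w := by
  ext k
  rw [coeff_C_mul, coeff_derivative, coeff_shiftedGegenbauer, coeff_shiftedGegenbauer,
    ← succ_mul_gegenbauerCoeff_succ_succ hl, mul_comm]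

/- With `θ = X d/dX`, this is the hypergeometric equation
`y (1 - y) A'' + (l + 1/2) (1 - 2 y) A' + w (w + 2 l) A = 0`; in this form both sides act on
coefficients without an index shift at `0`. -/
lemma shiftedGegenbauer_ode (hl : -1 / 2 < l) (w : ℕ) :
    let A := shiftedGegenbauer l w
    derivative (X * derivative A) + C (l - 1 / 2) * derivative A =
      X * derivative (X * derivative A) + C (2 * l) * (X * derivative A) -
        C (w * (w + 2 * l)) * A := by
  intro A
  ext k
  simp only [A, coeff_add, coeff_sub, coeff_C_mul, coeff_derivative, coeff_X_mul_derivative,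
    coeff_shiftedGegenbauer, Nat.cast_succ]
  linear_combination gegenbauerCoeff_succ_right hl w k

lemma shiftedGegenbauer_lowering (hl : -1 / 2 < l) (w : ℕ) :
    2 * (X * derivative (shiftedGegenbauer l (w + 1))) -
        derivative (shiftedGegenbauer l (w + 1)) + derivative (shiftedGegenbauer l w) =
      C (2 * (w + 1 : ℝ)) * shiftedGegenbauer l (w + 1) := by
  ext k
  simp only [coeff_add, coeff_sub, coeff_ofNat_mul, coeff_C_mul, coeff_derivative,
    coeff_X_mul_derivative, coeff_shiftedGegenbauer]
  have hw := gegenbauerCoeff_succ_right hl w k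
  have hw' := gegenbauerCoeff_succ_right hl (w + 1) k
  have hstep := gegenbauerCoeff_succ_left l w k
  have hk : 0 < (k : ℝ) + l + 1 / 2 := by linarith [k.cast_nonneg (α := ℝ)]
  push_cast at hw'
  apply mul_right_cancel₀ hk.ne'
  linear_combination hw - hw' + (w - k) * hstep

lemma derivative_gegenbauer (l : ℝ) (w : ℕ) :
    derivative (gegenbauer l w) =
      C (-1 / 2) * (derivative (shiftedGegenbauer l w)).comp (C (1 / 2) * (1 - X)) := by
  have hy : derivative (C (1 / 2 : ℝ) * (1 - X)) = C (-1 / 2) := by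
    rw [derivative_C_mul, derivative_sub, derivative_one, derivative_X, zero_sub, mul_neg, mul_one,
      ← C_neg, neg_div]
  rw [gegenbauer, derivative_comp, hy]

lemma gegenbauer_zero (l : ℝ) : gegenbauer l 0 = 1 := by
  simp [gegenbauer, shiftedGegenbauer, gegenbauerCoeff, poch]

lemma derivative_gegenbauer_succ (hl : -1 / 2 < l) (w : ℕ) :
    derivative (gegenbauer l (w + 1)) = C (2 * l) * gegenbauer (l + 1) w := by
  rw [derivative_gegenbauer, derivative_shiftedGegenbauer_succ hl, mul_comp, C_comp, ← mul_assoc,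
    ← C_mul, gegenbauer]
  congr 2
  ring

lemma gegenbauerDiv_derivative_gegenbauer (hl : -1 / 2 < l) (w : ℕ) :
    gegenbauerDiv l (derivative (gegenbauer l w)) = -C (w * (w + 2 * l)) * gegenbauer l w := by
  refine Polynomial.funext fun x ↦ ?_
  have hode := congrArg (eval ((1 - x) / 2)) (shiftedGegenbauer_ode hl w)
  rw [gegenbauerDiv, derivative_gegenbauer, gegenbauer, derivative_C_mul, derivative_comp]
  simp only [derivative_mul, derivative_C, zero_mul, derivative_sub, derivative_one,
    derivative_X, zero_sub, mul_neg, mul_one, zero_add, neg_mul, eval_sub, eval_neg, eval_mul,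
    eval_one, eval_pow, eval_X, eval_C, eval_comp, eval_add] at hode ⊢
  rw [show 1 / 2 * (1 - x) = (1 - x) / 2 by ring]
  linear_combination hode

lemma X_mul_derivative_gegenbauer_succ_sub (hl : -1 / 2 < l) (w : ℕ) :
    X * derivative (gegenbauer l (w + 1)) - derivative (gegenbauer l w) =
      C (w + 1 : ℝ) * gegenbauer l (w + 1) := by
  refine Polynomial.funext fun x ↦ ?_
  have hlower := congrArg (eval ((1 - x) / 2)) (shiftedGegenbauer_lowering hl w)
  rw [derivative_gegenbauer, derivative_gegenbauer, gegenbauer]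
  simp only [eval_sub, eval_mul, eval_X, eval_C, eval_comp, eval_one, eval_add, eval_ofNat]
    at hlower ⊢
  rw [show 1 / 2 * (1 - x) = (1 - x) / 2 by ring]
  linear_combination hlower / 2

lemma gegenbauerDiv_mul (l : ℝ) (r t : ℝ[X]) :
    gegenbauerDiv l (r * t) = gegenbauerDiv l r * t + (1 - X ^ 2) * (r * derivative t) := by
  rw [gegenbauerDiv, gegenbauerDiv, derivative_mul]
  ring

lemma geg_of_neg (l : ℝ) {w : ℤ} (hw : w < 0) (x : ℝ) : geg l w x = 0 := if_pos hw

lemma geg_natCast (l : ℝ) (w : ℕ) (x : ℝ) : geg l w x = (gegenbauer l w).eval x := by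
  simp only [geg, gegenbauer, shiftedGegenbauer, gegenbauerCoeff, eval_comp, eval_finsetSum,
    eval_mul, eval_pow, eval_C, eval_X, eval_sub, eval_one, Int.toNat_natCast, poch_add]
  rw [if_neg (by lia), Finset.mul_sum]
  exact Finset.sum_congr rfl fun k _ ↦ by ring_nf

lemma geg_add_one_sub_one (hl : 0 < l) (w : ℕ) (x : ℝ) :
    geg (l + 1) ((w : ℤ) - 1) x = (derivative (gegenbauer l w)).eval x / (2 * l) := by
  cases w with
  | zero => simp [geg_of_neg, gegenbauer_zero]
  | succ w =>
    rw [Nat.cast_succ, add_sub_cancel_right, geg_natCast,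
      derivative_gegenbauer_succ (by linarith), eval_C_mul, mul_div_cancel_left₀ _ (by positivity)]

lemma geg_add_one_sub_two (hl : 0 < l) (w : ℕ) (x : ℝ) :
    geg (l + 1) ((w : ℤ) - 2) x =
      (x * (derivative (gegenbauer l w)).eval x - w * (gegenbauer l w).eval x) / (2 * l) := by
  cases w with
  | zero => simp [geg_of_neg, gegenbauer_zero]
  | succ w =>
    have hlower := congrArg (eval x) (X_mul_derivative_gegenbauer_succ_sub (w := w)
      (show -1 / 2 < l by linarith))
    simp only [eval_sub, eval_mul, eval_X, eval_C] at hlower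
    rw [show ((w + 1 : ℕ) : ℤ) - 2 = w - 1 by push_cast; ring, geg_add_one_sub_one hl,
      Nat.cast_succ, ← hlower, sub_sub_cancel]

end GegenbauerPolynomial

section WeightFunction

open MeasureTheory

lemma one_sub_sq_rpow_eq_mul {x : ℝ} (hx : x ∈ Set.Icc (-1) 1) (a : ℝ) :
    (1 - x ^ 2) ^ a = (x + 1) ^ a * (1 - x) ^ a := by
  rw [← Real.mul_rpow (by linarith [hx.1]) (by linarith [hx.2])]
  ring_nf

lemma intervalIntegrable_one_sub_sq_rpow {a : ℝ} (ha : -1 < a) :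
    IntervalIntegrable (fun x : ℝ ↦ (1 - x ^ 2) ^ a) volume (-1) 1 := by
  have hleft : IntervalIntegrable (fun x : ℝ ↦ (1 - x ^ 2) ^ a) volume (-1) 0 := by
    have hsing : IntervalIntegrable (fun x : ℝ ↦ (x + 1) ^ a) volume (-1) 0 := by
      simpa using (intervalIntegral.intervalIntegrable_rpow' (a := 0) (b := 1) ha).comp_add_right 1
    have hreg : ContinuousOn (fun x : ℝ ↦ (1 - x) ^ a) (Set.uIcc (-1) 0) := by
      refine ContinuousOn.rpow_const (by fun_prop) fun x hx ↦ Or.inl ?_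
      rw [Set.uIcc_of_le (by norm_num)] at hx
      linarith [hx.2]
    refine (hsing.mul_continuousOn hreg).congr fun x hx ↦ ?_
    rw [Set.uIoc_of_le (by norm_num)] at hx
    exact (one_sub_sq_rpow_eq_mul ⟨hx.1.le, by linarith [hx.2]⟩ a).symm
  have hright : IntervalIntegrable (fun x : ℝ ↦ (1 - x ^ 2) ^ a) volume 0 1 := by
    rw [IntervalIntegrable.iff_comp_neg]
    simpa using hleft.symm
  exact hleft.trans hright

lemma integral_rpow_mul_two_sub_rpow {s : ℝ} (hs : 0 < s) :
    ∫ x in (0 : ℝ)..2, x ^ (s - 1) * (2 - x) ^ (s - 1) =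
      2 ^ (2 * s - 1) * (Real.Gamma s * Real.Gamma s / Real.Gamma (2 * s)) := by
  have hbeta := Complex.betaIntegral_scaled s s two_pos
  rw [Complex.betaIntegral_eq_Gamma_mul_div _ _ (by simpa) (by simpa), ← two_mul] at hbeta
  rw [← Complex.ofReal_inj, ← intervalIntegral.integral_ofReal]
  push_cast [Complex.ofReal_cpow zero_le_two, ← Complex.Gamma_ofReal]
  refine Eq.trans (intervalIntegral.integral_congr fun x hx ↦ ?_) hbeta
  rw [Set.uIcc_of_le zero_le_two] at hx
  push_cast [Complex.ofReal_cpow hx.1, Complex.ofReal_cpow (sub_nonneg.2 hx.2)]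
  rfl

lemma integral_one_sub_sq_rpow {s : ℝ} (hs : 0 < s) :
    ∫ x in (-1 : ℝ)..1, (1 - x ^ 2) ^ (s - 1) =
      √Real.pi * Real.Gamma s / Real.Gamma (s + 1 / 2) := by
  have hGamma : Real.Gamma (s + 1 / 2) ≠ 0 := (Real.Gamma_pos_of_pos (by positivity)).ne'
  have hGamma' : Real.Gamma (2 * s) ≠ 0 := (Real.Gamma_pos_of_pos (by positivity)).ne'
  have hpow : (2 : ℝ) ^ (2 * s - 1) * 2 ^ (1 - 2 * s) = 1 := by
    rw [← Real.rpow_add two_pos, sub_add_sub_cancel, sub_self, Real.rpow_zero]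
  calc ∫ x in (-1 : ℝ)..1, (1 - x ^ 2) ^ (s - 1)
      = ∫ x in (-1 : ℝ)..1, (x + 1) ^ (s - 1) * (2 - (x + 1)) ^ (s - 1) := by
        refine intervalIntegral.integral_congr fun x hx ↦ ?_
        rw [Set.uIcc_of_le (by norm_num)] at hx
        convert! one_sub_sq_rpow_eq_mul hx (s - 1) using 3
        ring
    _ = ∫ x in (0 : ℝ)..2, x ^ (s - 1) * (2 - x) ^ (s - 1) := by
        rw [intervalIntegral.integral_comp_add_right
          fun x : ℝ ↦ x ^ (s - 1) * (2 - x) ^ (s - 1)]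
        norm_num
    _ = √Real.pi * Real.Gamma s / Real.Gamma (s + 1 / 2) := by
        rw [integral_rpow_mul_two_sub_rpow hs, eq_div_iff hGamma, mul_assoc, div_mul_eq_mul_div,
          mul_assoc, Real.Gamma_mul_Gamma_add_half]
        field_simp
        linear_combination hpow

lemma hasDerivAt_one_sub_sq_rpow (a : ℝ) {x : ℝ} (hx : 0 < 1 - x ^ 2) :
    HasDerivAt (fun x : ℝ ↦ (1 - x ^ 2) ^ a) (-2 * a * x * (1 - x ^ 2) ^ (a - 1)) x := by
  have hbase : HasDerivAt (fun x : ℝ ↦ 1 - x ^ 2) (-(2 * x)) x := by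
    simpa using (hasDerivAt_pow 2 x).const_sub 1
  convert! hbase.rpow_const (p := a) (Or.inl hx.ne') using 1
  ring

end WeightFunction

section GegenbauerIntegral

open Polynomial

/-- Integration of polynomials over `[-1, 1]` against the Gegenbauer weight
`(1 - x²) ^ (l - 1/2)`, for which the `gegenbauer l w` are orthogonal. -/
noncomputable def gegenbauerIntegral (l : ℝ) (r : ℝ[X]) : ℝ :=
  ∫ x in (-1 : ℝ)..1, (1 - x ^ 2) ^ (l - 1 / 2) * r.eval x

/-- The squared norm of `gegenbauer l w` for `gegenbauerIntegral l`. -/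
noncomputable def gegenbauerNormSq (l : ℝ) (w : ℕ) : ℝ :=
  √Real.pi * Real.Gamma (l + 1 / 2) * l * poch (2 * l) w /
    (w.factorial * (l + w) * Real.Gamma (l + 1))

variable {l : ℝ}

lemma intervalIntegrable_gegenbauer_weight_mul (hl : -1 / 2 < l) (r : ℝ[X]) :
    IntervalIntegrable (fun x ↦ (1 - x ^ 2) ^ (l - 1 / 2) * r.eval x) MeasureTheory.volume (-1) 1 :=
  (intervalIntegrable_one_sub_sq_rpow (by linarith)).mul_continuousOn (by fun_prop)

lemma gegenbauerIntegral_add (hl : -1 / 2 < l) (r t : ℝ[X]) :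
    gegenbauerIntegral l (r + t) = gegenbauerIntegral l r + gegenbauerIntegral l t := by
  simp only [gegenbauerIntegral, eval_add, mul_add]
  exact intervalIntegral.integral_add (intervalIntegrable_gegenbauer_weight_mul hl r)
    (intervalIntegrable_gegenbauer_weight_mul hl t)

lemma gegenbauerIntegral_C_mul (l a : ℝ) (r : ℝ[X]) :
    gegenbauerIntegral l (C a * r) = a * gegenbauerIntegral l r := by
  simp only [gegenbauerIntegral, eval_C_mul, mul_left_comm _ a,
    intervalIntegral.integral_const_mul]

lemma gegenbauerIntegral_add_one (hl : -1 / 2 < l) (r : ℝ[X]) :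
    gegenbauerIntegral (l + 1) r = gegenbauerIntegral l ((1 - X ^ 2) * r) := by
  refine intervalIntegral.integral_congr fun x hx ↦ ?_
  rw [Set.uIcc_of_le (by norm_num)] at hx
  have hbase : 0 ≤ 1 - x ^ 2 := by nlinarith [hx.1, hx.2]
  simp only [eval_mul, eval_sub, eval_one, eval_pow, eval_X]
  rw [add_sub_right_comm, Real.rpow_add_one' hbase (by linarith), mul_assoc]

lemma gegenbauerIntegral_one (hl : -1 / 2 < l) :
    gegenbauerIntegral l 1 = √Real.pi * Real.Gamma (l + 1 / 2) / Real.Gamma (l + 1) := by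
  have h := integral_one_sub_sq_rpow (show 0 < l + 1 / 2 by linarith)
  simpa only [gegenbauerIntegral, eval_one, mul_one, add_assoc, add_halves, add_sub_assoc,
    show (1 / 2 : ℝ) - 1 = -(1 / 2) by norm_num, ← sub_eq_add_neg] using h

lemma gegenbauerIntegral_gegenbauerDiv (hl : -1 / 2 < l) (r : ℝ[X]) :
    gegenbauerIntegral l (gegenbauerDiv l r) = 0 := by
  have hcont : ContinuousOn (fun x : ℝ ↦ (1 - x ^ 2) ^ (l + 1 / 2) * r.eval x)
      (Set.Icc (-1) 1) :=
    (ContinuousOn.rpow_const (by fun_prop) fun x _ ↦ Or.inr (by linarith)).mul (by fun_prop)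
  have hderiv : ∀ x ∈ Set.Ioo (-1 : ℝ) 1,
      HasDerivAt (fun x : ℝ ↦ (1 - x ^ 2) ^ (l + 1 / 2) * r.eval x)
        ((1 - x ^ 2) ^ (l - 1 / 2) * (gegenbauerDiv l r).eval x) x := fun x hx ↦ by
    have hbase : 0 < 1 - x ^ 2 := by nlinarith [hx.1, hx.2]
    convert! (hasDerivAt_one_sub_sq_rpow (l + 1 / 2) hbase).mul (r.hasDerivAt x) using 1
    rw [show l + 1 / 2 = l - 1 / 2 + 1 by ring, Real.rpow_add_one hbase.ne', gegenbauerDiv]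
    simp only [eval_sub, eval_mul, eval_one, eval_pow, eval_X, eval_C, add_sub_cancel_right]
    ring
  rw [gegenbauerIntegral, intervalIntegral.integral_eq_sub_of_hasDerivAt_of_le (by norm_num) hcont
    hderiv (intervalIntegrable_gegenbauer_weight_mul hl _)]
  simp [Real.zero_rpow (show l + 1 / 2 ≠ 0 by linarith), -one_div]

lemma gegenbauerIntegral_derivative_mul_derivative (hl : -1 / 2 < l) {f : ℝ[X]} {m : ℝ}
    (hf : gegenbauerDiv l (derivative f) = -C m * f) (g : ℝ[X]) :
    gegenbauerIntegral l ((1 - X ^ 2) * (derivative f * derivative g)) =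
      m * gegenbauerIntegral l (f * g) := by
  have hdiv : (1 - X ^ 2) * (derivative f * derivative g) =
      gegenbauerDiv l (derivative f * g) + C m * (f * g) := by
    rw [gegenbauerDiv_mul, hf]
    ring
  rw [hdiv, gegenbauerIntegral_add hl, gegenbauerIntegral_gegenbauerDiv hl, zero_add,
    gegenbauerIntegral_C_mul]

lemma gegenbauerIntegral_derivative_gegenbauer_mul (hl : -1 / 2 < l) (w : ℕ) (g : ℝ[X]) :
    gegenbauerIntegral l ((1 - X ^ 2) * (derivative (gegenbauer l w) * derivative g)) =
      w * (w + 2 * l) * gegenbauerIntegral l (gegenbauer l w * g) :=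
  gegenbauerIntegral_derivative_mul_derivative hl (gegenbauerDiv_derivative_gegenbauer hl w) g

lemma gegenbauerIntegral_gegenbauer_mul_of_ne (hl : -1 / 2 < l) {i j : ℕ} (hij : i ≠ j) :
    gegenbauerIntegral l (gegenbauer l i * gegenbauer l j) = 0 := by
  have hi := gegenbauerIntegral_derivative_gegenbauer_mul hl i (gegenbauer l j)
  have hj := gegenbauerIntegral_derivative_gegenbauer_mul hl j (gegenbauer l i)
  rw [mul_comm (derivative _), mul_comm (gegenbauer l j), hi] at hj
  have hsum : (1 : ℝ) ≤ i + j := mod_cast (show 1 ≤ i + j by lia)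
  have hfactor : ((i : ℝ) - j) * (i + j + 2 * l) ≠ 0 :=
    mul_ne_zero (sub_ne_zero.2 (Nat.cast_injective.ne hij)) (by linarith)
  apply (mul_eq_zero.1 _).resolve_left hfactor
  linear_combination hj

lemma gegenbauerNormSq_pos (hl : 0 < l) (w : ℕ) : 0 < gegenbauerNormSq l w := by
  have hpoch := poch_pos (show 0 < 2 * l by positivity) w
  rw [gegenbauerNormSq]
  positivity

lemma gegenbauerNormSq_succ (hl : 0 < l) (w : ℕ) :
    (w + 1) * (w + 1 + 2 * l) * gegenbauerNormSq l (w + 1) =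
      (2 * l) ^ 2 * gegenbauerNormSq (l + 1) w := by
  have hGamma := (Real.Gamma_pos_of_pos (show 0 < l + 1 by positivity)).ne'
  have hpoch : poch (2 * l) (w + 1) * (w + 1 + 2 * l) =
      2 * l * (2 * l + 1) * poch (2 * (l + 1)) w := by
    have h := poch_succ (2 * l) (w + 1)
    rw [poch_succ', poch_succ', show 2 * l + 1 + 1 = 2 * (l + 1) by ring] at h
    push_cast at h
    linear_combination -h
  rw [gegenbauerNormSq, gegenbauerNormSq, show l + 1 + 1 / 2 = l + 1 / 2 + 1 by ring,
    Real.Gamma_add_one (s := l + 1 / 2) (by positivity),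
    Real.Gamma_add_one (s := l + 1) (by positivity), Nat.factorial_succ, add_right_comm l 1]
  push_cast
  rw [show l + ((w : ℝ) + 1) = l + w + 1 by ring]
  field_simp
  linear_combination hpoch

lemma gegenbauerIntegral_gegenbauer_mul_self (hl : 0 < l) (w : ℕ) :
    gegenbauerIntegral l (gegenbauer l w * gegenbauer l w) = gegenbauerNormSq l w := by
  induction w generalizing l with
  | zero =>
    rw [gegenbauer_zero, mul_one, gegenbauerIntegral_one (by linarith), gegenbauerNormSq]
    simp only [poch, Finset.range_zero, Finset.prod_empty, Nat.factorial_zero, Nat.cast_one,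
      Nat.cast_zero, add_zero, mul_one, one_mul]
    rw [mul_comm l, mul_div_mul_right _ _ hl.ne']
  | succ w ih =>
    have hl' : -1 / 2 < l := by linarith
    have henergy := gegenbauerIntegral_derivative_gegenbauer_mul hl' (w + 1) (gegenbauer l (w + 1))
    rw [← gegenbauerIntegral_add_one hl', derivative_gegenbauer_succ hl', mul_mul_mul_comm, ← C_mul,
      gegenbauerIntegral_C_mul, ih (by positivity), ← sq, ← gegenbauerNormSq_succ hl,
      Nat.cast_succ] at henergy
    exact (mul_left_cancel₀ (by positivity) henergy).symm

lemma gegenbauerIntegral_gegenbauer_mul (hl : 0 < l) (i j : ℕ) :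
    gegenbauerIntegral l (gegenbauer l i * gegenbauer l j) =
      if i = j then gegenbauerNormSq l i else 0 := by
  split_ifs with hij
  · rw [← hij, gegenbauerIntegral_gegenbauer_mul_self hl]
  · exact gegenbauerIntegral_gegenbauer_mul_of_ne (by linarith) hij

end GegenbauerIntegral

section MatrixPolynomials

open Polynomial

/-- The polynomial factor of the weight matrix, so that
`Wmat n p x = (1 - x²) ^ (n/2 - 1) • weightPolynomialMatrix p (n - p)` at `x`. -/
noncomputable def weightPolynomialMatrix (p q : ℝ) : Matrix (Fin 2) (Fin 2) ℝ[X] :=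
  !![C p * X ^ 2 + C q, -C (p + q) * X; -C (p + q) * X, C q * X ^ 2 + C p]

/-- The matrix polynomial attached to a scalar polynomial `f`. For `f = C_w^{(n+1)/2}` it is
`P_w`, up to a constant factor in each row. -/
noncomputable def gegenbauerMatrix (p q : ℝ) (f : ℝ[X]) : Matrix (Fin 2) (Fin 2) ℝ[X] :=
  !![C p * f + X * derivative f, derivative f; derivative f, C q * f + X * derivative f]

/-- The squared norms of the two rows of `gegenbauerMatrix p q (gegenbauer ((p + q + 1) / 2) w)`. -/
noncomputable def gegenbauerMatrixNormSq (p q : ℝ) (w : ℕ) : Fin 2 → ℝ :=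
  gegenbauerNormSq ((p + q + 1) / 2) w •
    ![p * (p + w) * (q + w + 1), q * (q + w) * (p + w + 1)]

/-- The normalized rows of `gegenbauerMatrix`, as matrix polynomials: the `Q_w` with
`n = p + q` allowed to be any real number. -/
noncomputable def orthonormalMatrix (p q : ℝ) (w : ℕ) : Matrix (Fin 2) (Fin 2) ℝ[X] :=
  Matrix.diagonal (fun a ↦ C (√(gegenbauerMatrixNormSq p q w a))⁻¹) *
    gegenbauerMatrix p q (gegenbauer ((p + q + 1) / 2) w)

variable {p q l : ℝ}

lemma transpose_gegenbauerMatrix (p q : ℝ) (f : ℝ[X]) :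
    (gegenbauerMatrix p q f)ᵀ = gegenbauerMatrix p q f :=
  (Matrix.eta_fin_two _).trans rfl

lemma gegenbauerMatrix_mul_weight (hpq : p + q = 2 * l + 1) (f : ℝ[X]) :
    gegenbauerMatrix p q f * weightPolynomialMatrix p q =
      !![C p * (C q * ((1 - X ^ 2) * f) - X * gegenbauerDiv l f), C p * gegenbauerDiv l f;
        C q * gegenbauerDiv l f, C q * (C p * ((1 - X ^ 2) * f) - X * gegenbauerDiv l f)] := by
  ext a b : 1
  fin_cases a <;> fin_cases b <;>
    simp only [gegenbauerMatrix, weightPolynomialMatrix, gegenbauerDiv, ← hpq, map_add,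
      Matrix.mul_apply, Fin.sum_univ_two, Fin.zero_eta, Fin.mk_one, Matrix.of_apply,
      Matrix.cons_val', Matrix.cons_val_zero, Matrix.cons_val_one, Matrix.cons_val_fin_one] <;>
    ring

lemma gegenbauerMatrix_diag_eq (hpq : p + q = 2 * l + 1) (f : ℝ[X]) {g : ℝ[X]} {m : ℝ}
    (hg : gegenbauerDiv (l + 1) (derivative g) = -C m * g) :
    C p * (C q * ((1 - X ^ 2) * f) - X * gegenbauerDiv l f) * (C p * g + X * derivative g) +
        C p * gegenbauerDiv l f * derivative g =
      gegenbauerDiv l (C p * f * ((1 - X ^ 2) * derivative g - C p * (X * g))) +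
        C (p * (p * (q + 1) + m)) * ((1 - X ^ 2) * (f * g)) := by
  have hν : C p + C q = 2 * C l + 1 := by
    simpa only [map_add, map_mul, map_one, map_ofNat] using congrArg C hpq
  simp only [gegenbauerDiv, map_add, map_mul, map_one, map_ofNat, derivative_mul, derivative_sub,
    derivative_C, derivative_one, derivative_X, derivative_X_sq] at hg ⊢
  linear_combination -(C p * f * (1 - X ^ 2)) * hg +
    C p * f * (1 - X ^ 2) * (X * derivative g) * hν

lemma gegenbauerMatrix_offDiag_eq (p q l : ℝ) (f g : ℝ[X]) :
    C p * (C q * ((1 - X ^ 2) * f) - X * gegenbauerDiv l f) * derivative g +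
        C p * gegenbauerDiv l f * (C q * g + X * derivative g) =
      gegenbauerDiv l (C (p * q) * (f * g)) := by
  rw [gegenbauerDiv, gegenbauerDiv, derivative_C_mul, derivative_mul, C_mul]
  ring

lemma gegenbauerMatrix_mul_weight_mul_transpose (hpq : p + q = 2 * l + 1) (f : ℝ[X]) {g : ℝ[X]}
    {m : ℝ} (hg : gegenbauerDiv (l + 1) (derivative g) = -C m * g) :
    gegenbauerMatrix p q f * weightPolynomialMatrix p q * (gegenbauerMatrix p q g)ᵀ =
      !![gegenbauerDiv l (C p * f * ((1 - X ^ 2) * derivative g - C p * (X * g))) +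
            C (p * (p * (q + 1) + m)) * ((1 - X ^ 2) * (f * g)),
          gegenbauerDiv l (C (p * q) * (f * g));
        gegenbauerDiv l (C (q * p) * (f * g)),
          gegenbauerDiv l (C q * f * ((1 - X ^ 2) * derivative g - C q * (X * g))) +
            C (q * (q * (p + 1) + m)) * ((1 - X ^ 2) * (f * g))] := by
  rw [← gegenbauerMatrix_diag_eq hpq f hg, ← gegenbauerMatrix_offDiag_eq,
    ← gegenbauerMatrix_diag_eq (add_comm q p ▸ hpq) f hg, ← gegenbauerMatrix_offDiag_eq,
    transpose_gegenbauerMatrix, gegenbauerMatrix_mul_weight hpq, gegenbauerMatrix,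
    Matrix.mul_fin_two, add_comm (C q * gegenbauerDiv l f * _),
    add_comm (C q * gegenbauerDiv l f * _)]

lemma map_gegenbauerIntegral_gegenbauerMatrix (hpq : p + q = 2 * l + 1) (hl : -1 / 2 < l)
    (i j : ℕ) :
    (gegenbauerMatrix p q (gegenbauer (l + 1) i) * weightPolynomialMatrix p q *
        (gegenbauerMatrix p q (gegenbauer (l + 1) j))ᵀ).map (gegenbauerIntegral l) =
      if i = j then Matrix.diagonal (gegenbauerMatrixNormSq p q i) else 0 := by
  have hl' : (p + q + 1) / 2 = l + 1 := by linarith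
  have hm (a b : ℝ) (hab : a + b = 2 * l + 1) :
      a * (a * (b + 1) + j * (j + 2 * (l + 1))) = a * (a + j) * (b + j + 1) := by
    linear_combination -a * j * hab
  have horth : gegenbauerIntegral l ((1 - X ^ 2) * (gegenbauer (l + 1) i * gegenbauer (l + 1) j)) =
      if i = j then gegenbauerNormSq (l + 1) i else 0 := by
    rw [← gegenbauerIntegral_add_one hl, gegenbauerIntegral_gegenbauer_mul (by linarith)]
  rw [gegenbauerMatrix_mul_weight_mul_transpose hpq _
    (gegenbauerDiv_derivative_gegenbauer (by linarith) j), hm p q hpq, hm q p (add_comm q p ▸ hpq),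
    gegenbauerMatrixNormSq, hl']
  obtain rfl | hij := eq_or_ne i j
  · ext a b : 1
    fin_cases a <;> fin_cases b <;>
      simp [gegenbauerIntegral_add hl, gegenbauerIntegral_C_mul,
        gegenbauerIntegral_gegenbauerDiv hl, horth, mul_comm (gegenbauerNormSq _ _), -map_mul,
        -map_add]
  · ext a b : 1
    fin_cases a <;> fin_cases b <;>
      simp [gegenbauerIntegral_add hl, gegenbauerIntegral_C_mul,
        gegenbauerIntegral_gegenbauerDiv hl, horth, hij, -map_mul, -map_add]

lemma gegenbauerMatrixNormSq_pos (hp : 0 < p) (hq : 0 < q) (w : ℕ) (a : Fin 2) :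
    0 < gegenbauerMatrixNormSq p q w a := by
  have hnorm := gegenbauerNormSq_pos (show 0 < (p + q + 1) / 2 by positivity) w
  have hfirst : 0 < p * (p + w) * (q + w + 1) := by positivity
  have hsecond : 0 < q * (q + w) * (p + w + 1) := by positivity
  fin_cases a
  exacts [mul_pos hnorm hfirst, mul_pos hnorm hsecond]

end MatrixPolynomials

section NormalizedPolynomials

open Polynomial

/- Each step from `w` to `w + 1` contributes the factor `a + w + 1`: through the product when `w` is
even, and through `2 Γ(s + 1) = 2 s Γ(s)` when `w` is odd. -/
lemma two_pow_mul_Gamma_mul_prod {a : ℝ} (ha : -2 < a) (w : ℕ) :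
    2 ^ (w / 2) * Real.Gamma (a / 2 + 1 + (w / 2 : ℕ)) *
        ∏ k ∈ Finset.range ((w + 1) / 2), (a + 2 * k + 1) =
      Real.Gamma (a / 2 + 1) * poch (a + 1) w := by
  induction w with
  | zero => simp [poch]
  | succ w ih =>
    rw [poch_succ, ← mul_assoc, ← ih]
    obtain ⟨m, rfl | rfl⟩ := w.even_or_odd'
    · rw [show (2 * m + 1 + 1) / 2 = m + 1 by lia, show (2 * m + 1) / 2 = m by lia,
        show 2 * m / 2 = m by lia, Finset.prod_range_succ]
      push_cast
      ring
    · have hm : a / 2 + 1 + m ≠ 0 := by linarith [m.cast_nonneg (α := ℝ)]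
      rw [show (2 * m + 1 + 1 + 1) / 2 = m + 1 by lia, show (2 * m + 1 + 1) / 2 = m + 1 by lia,
        show (2 * m + 1) / 2 = m by lia, Nat.cast_succ, ← add_assoc, Real.Gamma_add_one hm]
      push_cast
      ring

lemma Smat_eq_smul_diagonal (n : ℕ) (p : ℝ) (w : ℕ) :
    Smat n p w = √(((n : ℝ) + 1) ^ 2 / gegenbauerNormSq ((n + 1) / 2) w) •
      Matrix.diagonal ![√((p + w) / (p * ((n : ℝ) - p + w + 1))),
        √(((n : ℝ) - p + w) / (((n : ℝ) - p) * (p + w + 1)))] := by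
  have hpoch := poch_pos (show 0 < (n : ℝ) + 1 by positivity) w
  rw [Smat, mul_assoc √Real.pi, mul_assoc √Real.pi,
    two_pow_mul_Gamma_mul_prod (show (-2 : ℝ) < n by linarith [n.cast_nonneg (α := ℝ)]),
    gegenbauerNormSq, show ((n : ℝ) + 1) / 2 + 1 / 2 = n / 2 + 1 by ring,
    show ((n : ℝ) + 1) / 2 + 1 = n / 2 + 3 / 2 by ring, mul_div_cancel₀ _ two_ne_zero]
  congr 2
  field_simp
  ring

lemma Pmat_eq_diagonal_mul {n : ℕ} {p : ℝ} (w : ℕ) (hp : p + w ≠ 0) (hq : n - p + w ≠ 0) (x : ℝ) :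
    Pmat n p w x = Matrix.diagonal ![1 / ((n + 1) * (p + w)), 1 / ((n + 1) * (n - p + w))] *
      (gegenbauerMatrix p (n - p) (gegenbauer ((n + 1) / 2) w)).map (eval x) := by
  have hl : 0 < ((n : ℝ) + 1) / 2 := by positivity
  rw [Pmat, show ((n : ℝ) + 3) / 2 = (n + 1) / 2 + 1 by ring, geg_natCast,
    geg_add_one_sub_one hl, geg_add_one_sub_two hl, gegenbauerMatrix]
  ext a b : 1
  fin_cases a <;> fin_cases b <;>
    simp only [Fin.zero_eta, Fin.mk_one, Matrix.of_apply, Matrix.cons_val', Matrix.cons_val_zero,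
      Matrix.cons_val_one, Matrix.cons_val_fin_one, Matrix.diagonal_mul, Matrix.map_apply,
      eval_add, eval_mul, eval_C, eval_X] <;>
    field_simp <;> ring

lemma sqrt_div_mul_sqrt_div_mul_one_div {N h a b c : ℝ} (hN : 0 < N) (hh : 0 < h) (ha : 0 < a)
    (hb : 0 < b) (hc : 0 < c) :
    √(N ^ 2 / h) * √(b / (a * c)) * (1 / (N * b)) = (√(h * (a * b * c)))⁻¹ := by
  have hradicand : N ^ 2 / h * (b / (a * c)) = (N * b) ^ 2 / (h * (a * b * c)) := by field_simp
  rw [← Real.sqrt_mul (by positivity), hradicand, Real.sqrt_div (sq_nonneg _),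
    Real.sqrt_sq (by positivity), div_mul_div_cancel₀' (by positivity), one_div]

lemma Qmat_eq_map_orthonormalMatrix {n : ℕ} {p : ℝ} (hp : 0 < p) (hpn : p < n) (w : ℕ) (x : ℝ) :
    Qmat n p w x = (orthonormalMatrix p (n - p) w).map (eval x) := by
  have hq : 0 < (n : ℝ) - p := sub_pos.2 hpn
  have hN : 0 < (n : ℝ) + 1 := by positivity
  have hnorm := gegenbauerNormSq_pos (half_pos hN) w
  rw [Qmat, Smat_eq_smul_diagonal, Pmat_eq_diagonal_mul w (by positivity) (by positivity),
    orthonormalMatrix, ← Matrix.mul_assoc, Matrix.smul_mul, Matrix.diagonal_mul_diagonal,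
    ← coe_evalRingHom, Matrix.map_mul, Matrix.diagonal_map (map_zero _), ← Matrix.diagonal_smul,
    add_sub_cancel]
  congr 2
  ext a
  fin_cases a
  · simpa [gegenbauerMatrixNormSq, mul_assoc] using sqrt_div_mul_sqrt_div_mul_one_div hN hnorm hp
      (show 0 < p + w by positivity) (show 0 < n - p + w + 1 by positivity)
  · simpa [gegenbauerMatrixNormSq, mul_assoc] using sqrt_div_mul_sqrt_div_mul_one_div hN hnorm hq
      (show 0 < n - p + w by positivity) (show 0 < p + w + 1 by positivity)

lemma Wmat_eq_smul_map (n : ℕ) (p x : ℝ) :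
    Wmat n p x =
      (1 - x ^ 2) ^ ((n : ℝ) / 2 - 1) • (weightPolynomialMatrix p (n - p)).map (eval x) := by
  rw [Wmat, weightPolynomialMatrix, add_sub_cancel]
  congr 1
  ext a b
  fin_cases a <;> fin_cases b <;> simp [-map_sub, add_sub_assoc]

lemma integral_Qmat_mul_Wmat_mul_transpose {n : ℕ} {p : ℝ} (hp : 0 < p) (hpn : p < n) (i j : ℕ) :
    (Matrix.of fun a b : Fin 2 ↦
        ∫ x in (-1 : ℝ)..1, (Qmat n p i x * Wmat n p x * (Qmat n p j x)ᵀ) a b) =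
      (orthonormalMatrix p (n - p) i * weightPolynomialMatrix p (n - p) *
        (orthonormalMatrix p (n - p) j)ᵀ).map
        (gegenbauerIntegral ((p + (n - p) - 1) / 2)) := by
  ext a b
  refine intervalIntegral.integral_congr fun x _ ↦ ?_
  simp only [Qmat_eq_map_orthonormalMatrix hp hpn, Wmat_eq_smul_map, ← coe_evalRingHom,
    ← Matrix.transpose_map, Matrix.mul_smul, Matrix.smul_mul, ← Matrix.map_mul, Matrix.smul_apply,
    Matrix.map_apply, smul_eq_mul, add_sub_cancel]
  rw [show (n : ℝ) / 2 - 1 = (n - 1) / 2 - 1 / 2 by ring]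

end NormalizedPolynomials

theorem stmt_5_general {p q : ℝ} (hp : 0 < p) (hq : 0 < q) (i j : ℕ) :
    (orthonormalMatrix p q i * weightPolynomialMatrix p q * (orthonormalMatrix p q j)ᵀ).map
        (gegenbauerIntegral ((p + q - 1) / 2)) =
      if i = j then 1 else 0 := by
  have hrows := map_gegenbauerIntegral_gegenbauerMatrix
    (show p + q = 2 * ((p + q - 1) / 2) + 1 by ring) (by linarith) i j
  rw [show (p + q - 1) / 2 + 1 = (p + q + 1) / 2 by ring] at hrows
  ext a b
  have hentry := congrFun₂ hrows a b
  simp only [orthonormalMatrix, Matrix.transpose_mul, Matrix.diagonal_transpose, Matrix.map_apply,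
    ← Matrix.mul_assoc, Matrix.mul_diagonal] at hentry ⊢
  simp only [Matrix.mul_assoc, Matrix.diagonal_mul] at hentry ⊢
  rw [mul_right_comm, ← Polynomial.C_mul, gegenbauerIntegral_C_mul, hentry]
  split_ifs with hij
  · rw [← hij, Matrix.diagonal_apply, Matrix.one_apply]
    split_ifs with hab
    · have hpos := gegenbauerMatrixNormSq_pos hp hq i a
      rw [← hab, ← mul_inv, Real.mul_self_sqrt hpos.le, inv_mul_cancel₀ hpos.ne']
    · exact mul_zero _
  · simp

/-- Orthonormality: `∫_{-1}^{1} Q_i(x) W_{p,n}(x) Q_j(x)^T dx = δ_{ij} I`. -/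
theorem stmt_5 (n : ℕ) (hn : 1 ≤ n) (p : ℝ) (hp : 0 < p) (hpn : p < n) :
    ∀ i j : ℕ,
      (Matrix.of fun a b : Fin 2 =>
          ∫ x in (-1 : ℝ)..1, (Qmat n p i x * Wmat n p x * (Qmat n p j x)ᵀ) a b) =
        if i = j then (1 : Matrix (Fin 2) (Fin 2) ℝ) else 0 := by
  intro i j
  rw [integral_Qmat_mul_Wmat_mul_transpose hp hpn, stmt_5_general hp (sub_pos.2 hpn)]
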